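/- Let m be a positive integer and T a tree on 3m + 1 vertices. Then the number of maximum dissociation sets of T is at most 3^{m−1} + 1. -/

import Mathlib

open SimpleGraph

/-- `l` is a (not necessarily induced) `k`-path in `G`: a list of `k` pairwise distinct
vertices in which consecutive vertices are adjacent. -/
def IsKPath {V : Type*} (G : SimpleGraph V) (k : ℕ) (l : List V) : Prop :=
  l.length = k ∧ l.Nodup ∧ l.Chain' G.Adj

/-- A `k`-matching in `G`: a finite set of pairwise vertex-disjoint `k`-paths. -/
def IsKMatching {V : Type*} (G : SimpleGraph V) (k : ℕ) (M : Finset (List V)) : Prop :=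
  (∀ l ∈ M, IsKPath G k l) ∧
    (M : Set (List V)).Pairwise fun l₁ l₂ => ∀ v ∈ l₁, v ∉ l₂

/-- The `k`-matching number `μ_k(G)`: the maximum cardinality of a `k`-matching. -/
noncomputable def kMatchNum {V : Type*} (G : SimpleGraph V) (k : ℕ) : ℕ :=
  sSup {n | ∃ M : Finset (List V), IsKMatching G k M ∧ M.card = n}

/-- A maximum `k`-matching: a `k`-matching of cardinality `μ_k(G)`. -/
def IsMaxKMatching {V : Type*} (G : SimpleGraph V) (k : ℕ) (M : Finset (List V)) : Prop :=
  IsKMatching G k M ∧ M.card = kMatchNum G k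

/-- A `k`-independent set: a set of vertices whose induced subgraph contains no `k`-path. -/
def IsKIndepSet {V : Type*} (G : SimpleGraph V) (k : ℕ) (S : Finset V) : Prop :=
  ∀ l : List V, IsKPath G k l → ¬ (∀ v ∈ l, v ∈ S)

/-- The `k`-independence number `α_k(G)`. -/
noncomputable def kIndepNum {V : Type*} (G : SimpleGraph V) (k : ℕ) : ℕ :=
  sSup {n | ∃ S : Finset V, IsKIndepSet G k S ∧ S.card = n}

/-- A `k`-vertex cover: a set of vertices meeting every `k`-path of `G`. -/
def IsKCover {V : Type*} (G : SimpleGraph V) (k : ℕ) (C : Finset V) : Prop :=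
  ∀ l : List V, IsKPath G k l → ∃ v ∈ l, v ∈ C

/-- The `k`-vertex cover number `τ_k(G)`. -/
noncomputable def kCoverNum {V : Type*} (G : SimpleGraph V) (k : ℕ) : ℕ :=
  sInf {n | ∃ C : Finset V, IsKCover G k C ∧ C.card = n}

/-- A dissociation set: a set of vertices inducing a subgraph of maximum degree at most 1,
i.e. every vertex of `S` has at most one neighbour inside `S`. -/
def IsDissocSet {V : Type*} (G : SimpleGraph V) (S : Finset V) : Prop :=
  ∀ v ∈ S, ∀ u ∈ S, ∀ w ∈ S, G.Adj v u → G.Adj v w → u = w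

/-- The dissociation number `α₃(G)`. -/
noncomputable def dissNum {V : Type*} (G : SimpleGraph V) : ℕ :=
  sSup {n | ∃ S : Finset V, IsDissocSet G S ∧ S.card = n}

/-- A maximum dissociation set: a dissociation set of cardinality `α₃(G)`. -/
def IsMaxDissocSet {V : Type*} (G : SimpleGraph V) (S : Finset V) : Prop :=
  IsDissocSet G S ∧ S.card = dissNum G

/-- `uv` is an `α₃`-critical edge of `G`: deleting it increases the dissociation number. -/
def IsAlpha3Critical {V : Type*} (G : SimpleGraph V) (u v : V) : Prop :=
  G.Adj u v ∧ dissNum G < dissNum (G.deleteEdges {s(u, v)})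

/-- `uv` is a `μ₃`-critical edge of `G`: deleting it decreases the `3`-matching number. -/
def IsMu3Critical {V : Type*} (G : SimpleGraph V) (u v : V) : Prop :=
  G.Adj u v ∧ kMatchNum (G.deleteEdges {s(u, v)}) 3 < kMatchNum G 3

/-- An insulated `α₃`-critical edge: an `α₃`-critical edge sharing no end-vertex with any
other `α₃`-critical edge. -/
def IsInsulated {V : Type*} (G : SimpleGraph V) (u v : V) : Prop :=
  IsAlpha3Critical G u v ∧
    ∀ x y : V, IsAlpha3Critical G x y → s(x, y) ≠ s(u, v) →
      x ≠ u ∧ x ≠ v ∧ y ≠ u ∧ y ≠ v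

/-- A flexible vertex: one lying in some but not all maximum dissociation sets. -/
def IsFlexible {V : Type*} (G : SimpleGraph V) (v : V) : Prop :=
  (∃ S : Finset V, IsMaxDissocSet G S ∧ v ∈ S) ∧
    (∃ S : Finset V, IsMaxDissocSet G S ∧ v ∉ S)

/-- The set of static-included vertices: vertices lying in every maximum dissociation set. -/
def staticIncluded {V : Type*} (G : SimpleGraph V) : Set V :=
  {v | ∀ S : Finset V, IsMaxDissocSet G S → v ∈ S}

/-- The set of static-excluded vertices: vertices lying in no maximum dissociation set. -/
def staticExcluded {V : Type*} (G : SimpleGraph V) : Set V :=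
  {v | ∀ S : Finset V, IsMaxDissocSet G S → v ∉ S}

/-- The (unordered) edge `uv` occurs as an edge of the path recorded by the list `l`. -/
def EdgeInList {V : Type*} (l : List V) (u v : V) : Prop :=
  ∃ p ∈ l.zip l.tail, p = (u, v) ∨ p = (v, u)

/-!
In a tree a maximum packing of three-vertex paths has as many members as a minimum vertex set
meeting all such paths, because rooted subtrees have the Helly property. Hence the complement of
a maximum dissociation set is a transversal of a fixed packing of `k ≤ m` paths, which gives
`3 ^ k` candidates and settles the case `k < m`.

If `k = m`, a single vertex `v` is left uncovered, adjacent to a path `P i` say. It forces the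
deleted vertex of `P i` to be one of at most two. Fix `x` among `v` and the vertices of `P i`. For
one of the two choices, `x` survives together with a neighbour in the same block, and this
determines the choice on every other path adjacent to `x`; the other choice leaves at most
`3 ^ (m - 1)` transversals. If `x` can be taken adjacent to all other paths, the first choice
contributes a single transversal, whence the bound `3 ^ (m - 1) + 1`. Otherwise some further edge
between blocks constrains the second choice as well, and the two contribute at most `3 ^ m / 9` and
`2 * 3 ^ m / 9`.
-/

section Rooting

variable {V : Type*} {G T : SimpleGraph V} {π : V → V} {d : V → ℕ}

/-- A rooting of a forest `G`, encoded by a parent map `π` and a depth function `d`: of the two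
ends of an edge, one is the parent of the other and has smaller depth. The values of `π` at roots
are irrelevant. -/
def IsRooting (G : SimpleGraph V) (π : V → V) (d : V → ℕ) : Prop :=
  ∀ ⦃a b⦄, G.Adj a b → (π b = a ∧ d a < d b) ∨ (π a = b ∧ d b < d a)

theorem exists_isRooting_of_isTree (hT : T.IsTree) : ∃ π d, IsRooting T π d := by
  obtain ⟨r⟩ := hT.connected.nonempty
  choose p hp hlen using hT.connected.exists_path_of_dist r
  have penultimate_eq {a b : V} (hab : T.Adj a b) (hd : T.dist r b = T.dist r a + 1) :
      (p b).penultimate = a := by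
    have hpath : ((p a).concat hab).IsPath :=
      Walk.isPath_of_length_eq_dist _ (by rw [Walk.length_concat, hlen, hd])
    rw [(hT.existsUnique_path r b).unique (hp b) hpath, Walk.penultimate_concat]
  refine ⟨fun w => (p w).penultimate, T.dist r, fun a b hab => ?_⟩
  rcases hT.dist_eq_dist_add_one_of_adj r hab with hd | hd
  · exact .inr ⟨penultimate_eq hab.symm hd, by omega⟩
  · exact .inl ⟨penultimate_eq hab hd, by omega⟩

/-- `x` is the top of the set `s`, which spans a subtree with respect to the parent map `π` and
depth `d`: the parent of every other vertex of `s` lies in `s` again. -/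
structure IsSubtreeTop (π : V → V) (d : V → ℕ) (s : Set V) (x : V) : Prop where
  mem : x ∈ s
  parent : ∀ w ∈ s, w ≠ x → π w ∈ s ∧ d (π w) < d w

theorem IsSubtreeTop.depth_lt {s : Set V} {x w : V} (hx : IsSubtreeTop π d s x) (hw : w ∈ s)
    (hwx : w ≠ x) : d x < d w := by
  obtain ⟨hmem, hlt⟩ := hx.parent w hw hwx
  by_cases hpx : π w = x
  · exact hpx ▸ hlt
  · exact (hx.depth_lt hmem hpx).trans hlt
termination_by d w

-- Walking up from a common vertex stays in both subtrees until the first top, which is `x`.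
theorem IsSubtreeTop.mem_of_inter_nonempty {s t : Set V} {x y : V} (hx : IsSubtreeTop π d s x)
    (hy : IsSubtreeTop π d t y) (hyx : d y ≤ d x) (hst : (s ∩ t).Nonempty) : x ∈ t := by
  have climb (n : ℕ) : ∀ w ∈ s ∩ t, d w = n → x ∈ t := by
    induction n using Nat.strong_induction_on with
    | _ n ih =>
      rintro w ⟨hws, hwt⟩ rfl
      by_cases hwx : w = x
      · exact hwx ▸ hwt
      have hwy : w ≠ y := by
        rintro rfl
        exact (hx.depth_lt hws hwx).not_ge hyx
      obtain ⟨hps, hlt⟩ := hx.parent w hws hwx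
      exact ih _ hlt _ ⟨hps, (hy.parent w hwt hwy).1⟩ rfl
  obtain ⟨w, hw⟩ := hst
  exact climb _ w hw rfl

-- Greedy: a member whose top is deepest joins the packing, and its top hits all members it meets.
theorem exists_pairwiseDisjoint_hitting_of_isSubtreeTop {ι : Type*} (s : ι → Set V) (I : Finset ι)
    (hI : ∀ i ∈ I, ∃ x, IsSubtreeTop π d (s i) x) :
    ∃ J ⊆ I, (J : Set ι).PairwiseDisjoint s ∧
      ∃ C : Finset V, C.card ≤ J.card ∧ ∀ i ∈ I, ∃ x ∈ C, x ∈ s i := by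
  classical
  induction I using Finset.strongInduction with
  | H I ih =>
    rcases I.eq_empty_or_nonempty with rfl | hne
    · exact ⟨∅, subset_rfl, by simp, ∅, le_rfl, by simp⟩
    have : Nonempty V := hne.elim fun i hi => ⟨(hI i hi).choose⟩
    choose! x hx using hI
    obtain ⟨i, hi, hmax⟩ := I.exists_max_image (fun i => d (x i)) hne
    have hself : ¬Disjoint (s i) (s i) :=
      Set.not_disjoint_iff.2 ⟨x i, (hx i hi).mem, (hx i hi).mem⟩
    have hssub : {j ∈ I | Disjoint (s i) (s j)} ⊂ I := Finset.filter_ssubset.2 ⟨i, hi, hself⟩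
    obtain ⟨J, hJ, hdisj, C, hcard, hC⟩ :=
      ih _ hssub fun j hj => ⟨x j, hx j (Finset.mem_filter.1 hj).1⟩
    have hiJ : i ∉ J := fun h => hself (Finset.mem_filter.1 (hJ h)).2
    refine ⟨insert i J, Finset.insert_subset hi (hJ.trans (Finset.filter_subset _ _)), ?_,
      insert (x i) C, ?_, fun j hj => ?_⟩
    · rw [Finset.coe_insert]
      exact hdisj.insert fun j hj _ => (Finset.mem_filter.1 (hJ hj)).2
    · rw [Finset.card_insert_of_notMem hiJ]
      exact (Finset.card_insert_le _ _).trans (by omega)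
    · by_cases hij : Disjoint (s i) (s j)
      · obtain ⟨y, hy, hyj⟩ := hC j (Finset.mem_filter.2 ⟨hj, hij⟩)
        exact ⟨y, Finset.mem_insert_of_mem hy, hyj⟩
      · exact ⟨x i, Finset.mem_insert_self _ _, (hx i hi).mem_of_inter_nonempty (hx j hj)
          (hmax j hj) (Set.not_disjoint_iff_nonempty_inter.1 hij)⟩

end Rooting

section Packing

variable {V ι : Type*} {G : SimpleGraph V}

/-- `p` is a path `p 0, p 1, p 2` on three vertices in `G`. Compared with `IsKPath G 3`, the
vertices are indexed by `Fin 3`, with middle vertex `p 1`. -/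
structure IsP3 (G : SimpleGraph V) (p : Fin 3 → V) : Prop where
  injective : Function.Injective p
  adj_one : ∀ a ≠ 1, G.Adj (p 1) (p a)

theorem IsP3.adj {p : Fin 3 → V} (hp : IsP3 G p) {a b : Fin 3} (hab : a ≠ b)
    (hone : a = 1 ∨ b = 1) : G.Adj (p a) (p b) := by
  rcases hone with rfl | rfl
  · exact hp.adj_one b hab.symm
  · exact (hp.adj_one a hab).symm

theorem IsP3.exists_isSubtreeTop {π : V → V} {d : V → ℕ} (hG : IsRooting G π d) {p : Fin 3 → V}
    (hp : IsP3 G p) : ∃ x, IsSubtreeTop π d (Set.range p) x := by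
  rcases hG (hp.adj_one 0 (by decide)) with h0 | h0 <;>
    rcases hG (hp.adj_one 2 (by decide)) with h2 | h2
  · refine ⟨p 1, ⟨1, rfl⟩, ?_⟩
    rintro _ ⟨a, rfl⟩ ha
    fin_cases a <;> simp_all
  · refine ⟨p 2, ⟨2, rfl⟩, ?_⟩
    rintro _ ⟨a, rfl⟩ ha
    fin_cases a <;> simp_all
  · refine ⟨p 0, ⟨0, rfl⟩, ?_⟩
    rintro _ ⟨a, rfl⟩ ha
    fin_cases a <;> simp_all
  · exact absurd (hp.injective (h0.1.symm.trans h2.1)) (by decide)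

theorem isDissocSet_iff_forall_isP3 {S : Finset V} :
    IsDissocSet G S ↔ ∀ p, IsP3 G p → ∃ a, p a ∉ S := by
  constructor
  · intro hS p hp
    by_contra! hmem
    exact absurd (hp.injective (hS _ (hmem 1) _ (hmem 0) _ (hmem 2)
      (hp.adj_one 0 (by decide)) (hp.adj_one 2 (by decide)))) (by decide)
  · intro hS v hv u hu w hw hvu hvw
    by_contra huw
    have hp : IsP3 G ![u, v, w] := by
      refine ⟨fun a b hab => ?_, fun a ha => ?_⟩
      · fin_cases a <;> fin_cases b <;> simp_all [hvu.ne, hvu.ne', hvw.ne, hvw.ne', eq_comm]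
      · fin_cases a <;> simp_all
    obtain ⟨a, ha⟩ := hS _ hp
    fin_cases a <;> contradiction

/-- A packing of pairwise disjoint three-vertex paths, indexed by `ι` so that a choice of one
vertex from each path is a function `ι → Fin 3`. -/
structure IsP3Packing (G : SimpleGraph V) (P : ι → Fin 3 → V) : Prop where
  isP3 : ∀ i, IsP3 G (P i)
  disjoint : Pairwise fun i j => Disjoint (Set.range (P i)) (Set.range (P j))

theorem IsP3Packing.injective2 {P : ι → Fin 3 → V} (hP : IsP3Packing G P) :
    Function.Injective2 P := by
  intro i j a b h
  obtain rfl : i = j := by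
    by_contra hij
    exact Set.disjoint_left.1 (hP.disjoint hij) ⟨a, h⟩ ⟨b, rfl⟩
  exact ⟨rfl, (hP.isP3 i).injective h⟩

theorem IsDissocSet.card_le_dissNum [Finite V] {S : Finset V} (hS : IsDissocSet G S) :
    S.card ≤ dissNum G := by
  have := Fintype.ofFinite V
  refine le_csSup ⟨Fintype.card V, ?_⟩ ⟨S, hS, rfl⟩
  rintro n ⟨S, -, rfl⟩
  exact S.card_le_univ

theorem IsRooting.exists_isP3Packing_card_le_dissNum_add [Fintype V] {π : V → V} {d : V → ℕ}
    (hG : IsRooting G π d) :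
    ∃ J : Finset (Fin 3 → V), IsP3Packing G ((↑) : J → Fin 3 → V) ∧
      Fintype.card V ≤ dissNum G + J.card := by
  classical
  obtain ⟨J, hJ, hdisj, C, hcard, hC⟩ :=
    exists_pairwiseDisjoint_hitting_of_isSubtreeTop Set.range ({p | IsP3 G p} : Finset (Fin 3 → V))
      fun p hp => (Finset.mem_filter_univ p).1 hp |>.exists_isSubtreeTop hG
  refine ⟨J, ⟨fun p => (Finset.mem_filter_univ _).1 (hJ p.2), fun p q hpq =>
    hdisj p.2 q.2 (Subtype.coe_injective.ne hpq)⟩, ?_⟩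
  have hdissoc : IsDissocSet G Cᶜ := isDissocSet_iff_forall_isP3.2 fun p hp => by
    obtain ⟨_, hxC, a, rfl⟩ := hC p ((Finset.mem_filter_univ p).2 hp)
    exact ⟨a, Finset.notMem_compl.2 hxC⟩
  have := hdissoc.card_le_dissNum
  have := Finset.card_add_card_compl C
  omega

end Packing

section Transversal

variable {V ι : Type*} [Fintype V] {G : SimpleGraph V} {P : ι → Fin 3 → V} {f : ι → Fin 3}
  {i j : ι} {v x y : V} {a b : Fin 3}

open Classical in
/-- The set of vertices that remain when the vertex `P i (f i)` of every path `P i` is deleted. -/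
noncomputable def transversalCompl (P : ι → Fin 3 → V) (f : ι → Fin 3) : Finset V :=
  {x | ∀ i, P i (f i) ≠ x}

theorem mem_transversalCompl : x ∈ transversalCompl P f ↔ ∀ i, P i (f i) ≠ x := by
  simp [transversalCompl]

theorem mem_transversalCompl_of_forall_ne (hv : ∀ i a, P i a ≠ v) : v ∈ transversalCompl P f :=
  mem_transversalCompl.2 fun i => hv i (f i)

theorem IsP3Packing.apply_mem_transversalCompl (hP : IsP3Packing G P) (ha : a ≠ f i) :
    P i a ∈ transversalCompl P f :=
  mem_transversalCompl.2 fun _ h => by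
    obtain ⟨rfl, rfl⟩ := hP.injective2 h
    exact ha rfl

open Classical in
/-- The `3`-covers of `G` that are transversals of the packing `P`, each encoded by the choice `f`
of the vertex `P i (f i)` from every path. -/
noncomputable def coverTransversals [Fintype ι] (G : SimpleGraph V) (P : ι → Fin 3 → V) :
    Finset (ι → Fin 3) :=
  {f | IsDissocSet G (transversalCompl P f)}

theorem mem_coverTransversals [Fintype ι] :
    f ∈ coverTransversals G P ↔ IsDissocSet G (transversalCompl P f) := by
  simp [coverTransversals]

theorem IsP3Packing.exists_eq_transversalCompl [Fintype ι] (hP : IsP3Packing G P) {S : Finset V}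
    (hS : IsDissocSet G S) (hcard : Fintype.card V ≤ S.card + Fintype.card ι) :
    ∃ f, S = transversalCompl P f := by
  classical
  choose f hf using fun i => isDissocSet_iff_forall_isP3.1 hS (P i) (hP.isP3 i)
  have hsub : Finset.univ.image (fun i => P i (f i)) ⊆ Sᶜ := by
    simpa [Finset.subset_iff] using hf
  have himage : (Finset.univ.image fun i => P i (f i)).card = Fintype.card ι :=
    Finset.card_image_of_injective _ fun _ _ h => (hP.injective2 h).1
  have hcompl := Finset.eq_of_subset_of_card_le hsub (by
    have := S.card_add_card_compl
    omega)
  refine ⟨f, compl_injective ?_⟩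
  ext x
  simp [← hcompl, mem_transversalCompl]

theorem IsP3Packing.ncard_isMaxDissocSet_le [Fintype ι] (hP : IsP3Packing G P)
    (hcard : Fintype.card V ≤ dissNum G + Fintype.card ι) :
    {S : Finset V | IsMaxDissocSet G S}.ncard ≤ (coverTransversals G P).card := by
  have hsub : {S | IsMaxDissocSet G S} ⊆ transversalCompl P '' coverTransversals G P := by
    rintro S ⟨hS, hmax⟩
    obtain ⟨f, rfl⟩ := hP.exists_eq_transversalCompl hS (hmax ▸ hcard)
    exact ⟨f, mem_coverTransversals.2 hS, rfl⟩
  calc {S : Finset V | IsMaxDissocSet G S}.ncard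
      ≤ (transversalCompl P '' coverTransversals G P).ncard :=
        Set.ncard_le_ncard hsub ((Finset.finite_toSet _).image _)
    _ ≤ (coverTransversals G P).card := by
        simpa using Set.ncard_image_le (f := transversalCompl P)
          (coverTransversals G P).finite_toSet

theorem IsP3Packing.three_mul_card_le [Fintype ι] (hP : IsP3Packing G P) :
    3 * Fintype.card ι ≤ Fintype.card V := by
  simpa [mul_comm] using Fintype.card_le_of_injective _ hP.injective2.uncurry

theorem IsP3Packing.exists_forall_ne_of_card_eq [Fintype ι] (hP : IsP3Packing G P)
    (hcard : Fintype.card V = 3 * Fintype.card ι + 1) :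
    ∃ v, (∀ i a, P i a ≠ v) ∧ ∀ x ≠ v, ∃ i a, P i a = x := by
  classical
  let U : Finset V := (Finset.univ.image (Function.uncurry P))ᶜ
  have hU {x : V} : x ∈ U ↔ ∀ i a, P i a ≠ x := by simp [U]
  obtain ⟨v, hv⟩ : ∃ v, U = {v} := by
    rw [← Finset.card_eq_one, Finset.card_compl,
      Finset.card_image_of_injective _ hP.injective2.uncurry, hcard]
    simp [mul_comm]
  refine ⟨v, hU.1 (by simp [hv]), fun x hx => ?_⟩
  by_contra! hxU
  exact hx (by simpa [hv] using hU.2 hxU)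

section Forcing

variable (hP : IsP3Packing G P) (hf : IsDissocSet G (transversalCompl P f))
include hP hf

theorem IsP3Packing.apply_eq_or_apply_eq_one (hx : x ∈ transversalCompl P f)
    (hxi : x ∉ Set.range (P i)) (hadj : G.Adj x (P i a)) : f i = a ∨ a ≠ 1 ∧ f i = 1 := by
  by_contra! hne
  obtain ⟨b, hab, hbf, hone⟩ : ∃ b, a ≠ b ∧ b ≠ f i ∧ (a = 1 ∨ b = 1) := by
    have : ∀ a c : Fin 3, c ≠ a ∧ (a ≠ 1 → c ≠ 1) → ∃ b, a ≠ b ∧ b ≠ c ∧ (a = 1 ∨ b = 1) := by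
      decide
    exact this a (f i) hne
  have ha := hP.apply_mem_transversalCompl hne.1.symm
  have hb := hP.apply_mem_transversalCompl hbf
  exact hxi ⟨b, (hf _ ha _ hx _ hb hadj.symm ((hP.isP3 i).adj hab hone)).symm⟩

theorem IsP3Packing.apply_eq_of_adj_adj (hx : x ∈ transversalCompl P f)
    (hy : y ∈ transversalCompl P f) (hyi : y ∉ Set.range (P i)) (hxy : G.Adj x y)
    (hadj : G.Adj x (P i a)) : f i = a := by
  by_contra hne
  exact hyi ⟨a, (hf x hx y hy _ (hP.apply_mem_transversalCompl (Ne.symm hne)) hxy hadj).symm⟩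

theorem IsP3Packing.apply_eq_or_of_adj (hij : i ≠ j) (hadj : G.Adj (P i a) (P j b)) :
    f i = a ∨ f j = b ∨ (a ≠ 1 ∧ f i = 1 ∧ b ≠ 1 ∧ f j = 1) := by
  by_cases hia : f i = a
  · exact .inl hia
  by_cases hjb : f j = b
  · exact .inr (.inl hjb)
  have hi := hP.apply_eq_or_apply_eq_one hf (hP.apply_mem_transversalCompl (Ne.symm hjb))
    (Set.disjoint_right.1 (hP.disjoint hij) ⟨b, rfl⟩) hadj.symm
  have hj := hP.apply_eq_or_apply_eq_one hf (hP.apply_mem_transversalCompl (Ne.symm hia))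
    (Set.disjoint_left.1 (hP.disjoint hij) ⟨a, rfl⟩) hadj
  tauto

end Forcing

end Transversal

section Counting

variable {ι κ α : Type*} [Fintype ι] [Fintype κ] [Fintype α]

theorem card_mul_card_pow_le_of_comp_mem {e : κ → ι} (he : Function.Injective e)
    {R : Finset (κ → α)} {F : Finset (ι → α)} (hF : ∀ f ∈ F, f ∘ e ∈ R) :
    F.card * Fintype.card α ^ Fintype.card κ ≤ R.card * Fintype.card α ^ Fintype.card ι := by
  classical
  have hinj : Set.InjOn (fun f : ι → α => (f ∘ e, (Set.range e)ᶜ.domRestrict f)) F := by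
    intro f _ g _ hfg
    obtain ⟨hrange, hcompl⟩ := Prod.mk.inj hfg
    funext i
    by_cases hi : i ∈ Set.range e
    · obtain ⟨k, rfl⟩ := hi
      exact congrFun hrange k
    · exact congrFun hcompl ⟨i, hi⟩
  have hcard : Fintype.card ↥(Set.range e)ᶜ + Fintype.card κ = Fintype.card ι := by
    rw [Fintype.card_compl_set, Set.card_range_of_injective he,
      Nat.sub_add_cancel (Fintype.card_le_of_injective e he)]
  have hle : F.card ≤ (R ×ˢ (Finset.univ : Finset (↥(Set.range e)ᶜ → α))).card :=
    Finset.card_le_card_of_injOn _ (fun f hf => by simpa using hF f hf) hinj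
  rw [Finset.card_product, Finset.card_univ, Fintype.card_fun] at hle
  calc F.card * Fintype.card α ^ Fintype.card κ
      ≤ R.card * Fintype.card α ^ Fintype.card ↥(Set.range e)ᶜ
          * Fintype.card α ^ Fintype.card κ := Nat.mul_le_mul_right _ hle
    _ = R.card * Fintype.card α ^ Fintype.card ι := by rw [mul_assoc, ← pow_add, hcard]

theorem card_mul_card_le_of_forall_apply_eq {F : Finset (ι → α)} {i : ι} {c : α}
    (hF : ∀ f ∈ F, f i = c) : F.card * Fintype.card α ≤ Fintype.card α ^ Fintype.card ι := by
  have := card_mul_card_pow_le_of_comp_mem (e := fun _ : Unit => i)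
    (Function.injective_of_subsingleton _) (R := {fun _ => c})
    fun f hf => Finset.mem_singleton.2 (funext fun _ => hF f hf)
  simpa using this

theorem card_mul_sq_le_of_forall_apply_mem {F : Finset (ι → α)} {i j : ι} (hij : i ≠ j)
    {s t : Finset α} (hF : ∀ f ∈ F, f i ∈ s ∧ f j ∈ t) :
    F.card * Fintype.card α ^ 2 ≤ s.card * t.card * Fintype.card α ^ Fintype.card ι := by
  classical
  have hinj : Function.Injective ![i, j] := by
    rw [injective_pair_iff_ne]
    exact hij
  have := card_mul_card_pow_le_of_comp_mem hinj (R := Fintype.piFinset ![s, t]) (F := F)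
    fun f hf => by simpa [Fin.forall_fin_two] using hF f hf
  simpa using this

end Counting

section UncoveredVertex

variable {V ι : Type*} {G : SimpleGraph V} {P : ι → Fin 3 → V}
  {f : ι → Fin 3} {v x y : V} {i j k : ι} {a b c p q r : Fin 3}

theorem IsP3Packing.exists_adj_of_notMem (hP : IsP3Packing G P) (hG : G.Preconnected)
    (hv : ∀ i a, P i a ≠ v) (hV : ∀ x ≠ v, ∃ i a, P i a = x) {I : Set ι} (hk : k ∉ I) :
    ∃ x, (x = v ∨ ∃ i ∈ I, x ∈ Set.range (P i)) ∧ ∃ j ∉ I, ∃ b, G.Adj x (P j b) := by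
  let A : Set V := {x | x = v ∨ ∃ i ∈ I, x ∈ Set.range (P i)}
  have hkA : P k 0 ∉ A := by
    rintro (h | ⟨i, hi, a, h⟩)
    · exact hv k 0 h
    · exact hk ((hP.injective2 h).1 ▸ hi)
  obtain ⟨w⟩ := hG v (P k 0)
  obtain ⟨e, -, hx, hy⟩ := w.exists_boundary_dart A (.inl rfl) hkA
  obtain ⟨j, b, hjb⟩ := hV e.snd fun h => hy (.inl h)
  exact ⟨e.fst, hx, j, fun hj => hy (.inr ⟨j, hj, b, hjb⟩), b, hjb ▸ e.adj⟩

theorem IsP3Packing.card_mul_nine_le_of_adj_of_adj [Fintype V] [Fintype ι]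
    (hP : IsP3Packing G P) {F : Finset (ι → Fin 3)}
    (hF : ∀ f ∈ F, IsDissocSet G (transversalCompl P f) ∧ f i = c) (hji : j ≠ i) (hki : k ≠ i)
    (hjk : j ≠ k) (hadj : G.Adj (P j a) (P k b)) : F.card * 9 ≤ 2 * 3 ^ Fintype.card ι := by
  let R : Finset (Fin 3 → Fin 3) :=
    {g | g 0 = c ∧ (g 1 = a ∨ g 2 = b ∨ (a ≠ 1 ∧ g 1 = 1 ∧ b ≠ 1 ∧ g 2 = 1))}
  -- Five pairs `(g 1, g 2)` satisfy one of the first two clauses, and `(1, 1)` is the only other.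
  have hR : R.card ≤ 6 := by
    dsimp only [R]
    clear * -
    revert a b c
    decide
  have hinj : Function.Injective ![i, j, k] := by
    intro s t hst
    fin_cases s <;> fin_cases t <;> simp_all
  have hcount := card_mul_card_pow_le_of_comp_mem hinj (R := R) fun f hfF => by
    obtain ⟨hf, hfi⟩ := hF f hfF
    simpa [R, hfi] using hP.apply_eq_or_of_adj hf hjk hadj
  simp only [Fintype.card_fin] at hcount
  have := Nat.mul_le_mul_right (3 ^ Fintype.card ι) hR
  omega

variable (hP : IsP3Packing G P) (hv : ∀ i a, P i a ≠ v)
include hP hv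

theorem IsP3Packing.exists_adj_and_exists_adj_ne_or (hG : G.Preconnected)
    (hV : ∀ x ≠ v, ∃ i a, P i a = x)
    (hi : ∀ x ∈ insert v (Set.range (P i)), ∃ j ≠ i, ∀ q, ¬ G.Adj x (P j q)) :
    ∃ x ∈ insert v (Set.range (P i)), (∃ j ≠ i, ∃ q, G.Adj x (P j q)) ∧
      ((∃ y ∈ insert v (Set.range (P i)), y ≠ x ∧ ∃ k ≠ i, ∃ r, G.Adj y (P k r)) ∨
        ∃ j ≠ i, ∃ k ≠ i, j ≠ k ∧ ∃ a b, G.Adj (P j a) (P k b)) := by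
  obtain ⟨j₀, hj₀, -⟩ := hi v (.inl rfl)
  obtain ⟨x, hx, j, hj, q, hxj⟩ := hP.exists_adj_of_notMem hG hv hV (I := {i}) hj₀
  replace hx : x ∈ insert v (Set.range (P i)) := by simpa using hx
  obtain ⟨k₀, hk₀, hxk₀⟩ := hi x hx
  obtain ⟨y, hy, k, hk, r, hyk⟩ := hP.exists_adj_of_notMem hG hv hV
    (I := insert i {l | ∃ q, G.Adj x (P l q)}) (k := k₀) (by simpa [hk₀] using hxk₀)
  obtain ⟨hki, hxk⟩ : k ≠ i ∧ ∀ q, ¬ G.Adj x (P k q) := by simpa using hk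
  refine ⟨x, hx, ⟨j, hj, q, hxj⟩, ?_⟩
  by_cases hyi : y ∈ insert v (Set.range (P i))
  · exact .inl ⟨y, hyi, by rintro rfl; exact hxk r hyk, k, hki, r, hyk⟩
  · obtain rfl | ⟨l, rfl | ⟨q', hxl⟩, hyl⟩ := hy
    · exact absurd (.inl rfl) hyi
    · exact absurd (.inr hyl) hyi
    · obtain ⟨a, rfl⟩ := hyl
      refine .inr ⟨l, by rintro rfl; exact hyi (.inr ⟨a, rfl⟩), k, hki, ?_, a, r, hyk⟩
      rintro rfl
      exact hxk _ hxl

theorem IsP3Packing.notMem_range_of_ne (hij : i ≠ j) (hx : x ∈ insert v (Set.range (P i))) :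
    x ∉ Set.range (P j) := by
  rintro ⟨b, rfl⟩
  rcases hx with h | hx
  · exact hv j b h
  · exact Set.disjoint_left.1 (hP.disjoint hij) hx ⟨b, rfl⟩

variable [Fintype V]

theorem IsP3Packing.mem_transversalCompl_of_ne (hx : x ∈ insert v (Set.range (P i)))
    (hxi : x ≠ P i (f i)) : x ∈ transversalCompl P f := by
  rcases hx with rfl | ⟨a, rfl⟩
  · exact mem_transversalCompl_of_forall_ne hv
  · exact hP.apply_mem_transversalCompl fun h => hxi (by rw [h])

theorem IsP3Packing.exists_apply_eq_or_forced (hvp : G.Adj v (P i p))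
    (hx : x ∈ insert v (Set.range (P i))) :
    ∃ c d, ∀ f, IsDissocSet G (transversalCompl P f) →
      f i = c ∨ f i = d ∧ ∀ j ≠ i, ∀ q, G.Adj x (P j q) → f j = q := by
  have hvmem (f) : v ∈ transversalCompl P f := mem_transversalCompl_of_forall_ne hv
  have hroot {f} (hf : IsDissocSet G (transversalCompl P f)) : f i = p ∨ p ≠ 1 ∧ f i = 1 :=
    hP.apply_eq_or_apply_eq_one hf (hvmem f) (by rintro ⟨a, h⟩; exact hv i a h) hvp
  have hforce {f} (hf : IsDissocSet G (transversalCompl P f)) {y}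
      (hy : y ∈ insert v (Set.range (P i))) (hxf : x ≠ P i (f i)) (hyf : y ≠ P i (f i))
      (hxy : G.Adj x y) : ∀ j ≠ i, ∀ q, G.Adj x (P j q) → f j = q := fun j hji q hq =>
    hP.apply_eq_of_adj_adj hf (hP.mem_transversalCompl_of_ne hv hx hxf)
      (hP.mem_transversalCompl_of_ne hv hy hyf) (hP.notMem_range_of_ne hv hji.symm hy) hxy hq
  have hne {a b} (hab : a ≠ b) : P i a ≠ P i b := (hP.isP3 i).injective.ne hab
  by_cases hp : p = 1
  · exact ⟨1, 1, fun f hf => .inl (by simpa [hp] using hroot hf)⟩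
  rcases hx with rfl | ⟨a, rfl⟩
  · refine ⟨p, 1, fun f hf => (hroot hf).imp_right fun ⟨_, hf1⟩ => ⟨hf1, ?_⟩⟩
    exact hforce hf (.inr ⟨p, rfl⟩) (hv i _).symm (hf1 ▸ hne hp) hvp
  by_cases hap : a = p
  · subst hap
    refine ⟨a, 1, fun f hf => (hroot hf).imp_right fun ⟨_, hf1⟩ => ⟨hf1, ?_⟩⟩
    exact hforce hf (.inl rfl) (hf1 ▸ hne hp) (hv i _).symm hvp.symm
  · obtain ⟨b, hbp, hab, hone⟩ : ∃ b, b ≠ p ∧ a ≠ b ∧ (a = 1 ∨ b = 1) := by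
      have : ∀ a p : Fin 3, p ≠ 1 → a ≠ p → ∃ b, b ≠ p ∧ a ≠ b ∧ (a = 1 ∨ b = 1) := by decide
      exact this a p hp hap
    refine ⟨1, p, fun f hf => (hroot hf).symm.imp And.right fun hfp => ⟨hfp, ?_⟩⟩
    exact hforce hf (.inr ⟨b, rfl⟩) (hfp ▸ hne hap) (hfp ▸ hne hbp) ((hP.isP3 i).adj hab hone)

theorem IsP3Packing.card_mul_nine_le_of_adj [Fintype ι] {F : Finset (ι → Fin 3)}
    (hF : ∀ f ∈ F, IsDissocSet G (transversalCompl P f) ∧ f i = c)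
    (hx : x ∈ insert v (Set.range (P i))) (hxc : x ≠ P i c) (hji : j ≠ i)
    (hxj : G.Adj x (P j q)) : F.card * 9 ≤ 2 * 3 ^ Fintype.card ι := by
  have hmem : ∀ f ∈ F, f i ∈ ({c} : Finset (Fin 3)) ∧ f j ∈ ({q, 1} : Finset (Fin 3)) := by
    intro f hfF
    obtain ⟨hf, rfl⟩ := hF f hfF
    have := hP.apply_eq_or_apply_eq_one hf (hP.mem_transversalCompl_of_ne hv hx hxc)
      (hP.notMem_range_of_ne hv hji.symm hx) hxj
    exact ⟨Finset.mem_singleton_self _, by simpa using this.imp_right And.right⟩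
  have hcount := card_mul_sq_le_of_forall_apply_mem hji.symm hmem
  rw [Finset.card_singleton, one_mul, Fintype.card_fin] at hcount
  exact hcount.trans (Nat.mul_le_mul_right _ Finset.card_le_two)

theorem IsP3Packing.card_coverTransversals_le_of_dominated [Fintype ι] (hvp : G.Adj v (P i p))
    (hx : x ∈ insert v (Set.range (P i))) (hdom : ∀ j ≠ i, ∃ q, G.Adj x (P j q)) :
    (coverTransversals G P).card ≤ 3 ^ (Fintype.card ι - 1) + 1 := by
  classical
  obtain ⟨c, d, hcd⟩ := hP.exists_apply_eq_or_forced hv hvp hx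
  choose! q hq using hdom
  have hsub : coverTransversals G P ⊆
      insert (Function.update q i d) {f ∈ coverTransversals G P | f i = c} := by
    intro f hf
    rcases hcd f (mem_coverTransversals.1 hf) with hfc | ⟨rfl, hforced⟩
    · simp [hf, hfc]
    · exact Finset.mem_insert.2 (.inl (Function.eq_update_iff.2
        ⟨rfl, fun j hj => hforced j hj _ (hq j hj)⟩))
  refine (Finset.card_le_card hsub).trans ((Finset.card_insert_le _ _).trans ?_)
  have hc := card_mul_card_le_of_forall_apply_eq (F := {f ∈ coverTransversals G P | f i = c})
    fun f hf => (Finset.mem_filter.1 hf).2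
  have : Nonempty ι := ⟨i⟩
  rw [← pow_sub_one_mul Fintype.card_ne_zero, Fintype.card_fin] at hc
  omega

theorem IsP3Packing.card_coverTransversals_le_of_not_dominated [Fintype ι] (hG : G.Preconnected)
    (hV : ∀ x ≠ v, ∃ i a, P i a = x) (hvp : G.Adj v (P i p))
    (hi : ∀ x ∈ insert v (Set.range (P i)), ∃ j ≠ i, ∀ q, ¬ G.Adj x (P j q)) :
    (coverTransversals G P).card ≤ 3 ^ (Fintype.card ι - 1) := by
  classical
  obtain ⟨x, hx, ⟨j, hji, q, hxj⟩, hor⟩ := hP.exists_adj_and_exists_adj_ne_or hv hG hV hi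
  obtain ⟨c, d, hcd⟩ := hP.exists_apply_eq_or_forced hv hvp hx
  let Fc := {f ∈ coverTransversals G P | f i = c}
  let Fd := {f ∈ coverTransversals G P | f i = d ∧ f j = q}
  have hsub : coverTransversals G P ⊆ Fc ∪ Fd := fun f hf => by
    simpa [Fc, Fd, hf] using
      (hcd f (mem_coverTransversals.1 hf)).imp_right fun h => ⟨h.1, h.2 j hji q hxj⟩
  have hd : Fd.card * 9 ≤ 3 ^ Fintype.card ι := by
    simpa using card_mul_sq_le_of_forall_apply_mem hji.symm (F := Fd) (s := {d}) (t := {q})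
      fun f hf => by simpa [Fd] using (Finset.mem_filter.1 hf).2
  have hFc : ∀ f ∈ Fc, IsDissocSet G (transversalCompl P f) ∧ f i = c := fun f hf =>
    (Finset.mem_filter.1 hf).imp_left mem_coverTransversals.1
  have hc : Fc.card * 9 ≤ 2 * 3 ^ Fintype.card ι := by
    rcases hor with ⟨y, hy, hyx, k, hki, r, hyk⟩ | ⟨j, hj, k, hk, hjk, a, b, hadj⟩
    · by_cases hxc : x = P i c
      · exact hP.card_mul_nine_le_of_adj hv hFc hy (hxc ▸ hyx) hki hyk
      · exact hP.card_mul_nine_le_of_adj hv hFc hx hxc hji hxj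
    · exact hP.card_mul_nine_le_of_adj_of_adj hFc hj hk hjk hadj
  have hcard := (Finset.card_le_card hsub).trans (Finset.card_union_le Fc Fd)
  have : Nonempty ι := ⟨i⟩
  rw [← pow_sub_one_mul Fintype.card_ne_zero] at hc hd
  omega

theorem IsP3Packing.card_coverTransversals_le [Fintype ι] [Nonempty ι] (hG : G.Preconnected)
    (hV : ∀ x ≠ v, ∃ i a, P i a = x) :
    (coverTransversals G P).card ≤ 3 ^ (Fintype.card ι - 1) + 1 := by
  obtain ⟨v', hv', i, -, p, hvp⟩ := hP.exists_adj_of_notMem hG hv hV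
    (Set.notMem_empty (Classical.arbitrary ι))
  obtain rfl : v' = v := by simpa using hv'
  by_cases hdom : ∃ x ∈ insert v' (Set.range (P i)), ∀ j ≠ i, ∃ q, G.Adj x (P j q)
  · obtain ⟨x, hx, hdom⟩ := hdom
    exact hP.card_coverTransversals_le_of_dominated hv hvp hx hdom
  · push Not at hdom
    exact (hP.card_coverTransversals_le_of_not_dominated hv hG hV hvp hdom).trans (Nat.le_succ _)

end UncoveredVertex

/-- A tree on `3m + 1` vertices (`m ≥ 1`) has at most `3^(m-1) + 1` maximum dissociation
sets. -/
theorem tree_numMaxDissoc_le_of_card_eq_three_mul_add_one {V : Type*} [Fintype V]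
    [DecidableEq V] (T : SimpleGraph V) (hT : T.IsTree) (m : ℕ) (hm : 1 ≤ m)
    (hcard : Fintype.card V = 3 * m + 1) :
    {S : Finset V | IsMaxDissocSet T S}.ncard ≤ 3 ^ (m - 1) + 1 := by
  obtain ⟨π, d, hπ⟩ := exists_isRooting_of_isTree hT
  obtain ⟨J, hP, hJ⟩ := hπ.exists_isP3Packing_card_le_dissNum_add
  rw [← Fintype.card_coe J] at hJ
  refine (hP.ncard_isMaxDissocSet_le hJ).trans ?_
  have hJm : 3 * Fintype.card J ≤ 3 * m + 1 := hcard ▸ hP.three_mul_card_le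
  obtain hlt | rfl : Fintype.card J < m ∨ Fintype.card J = m := by omega
  · calc (coverTransversals T ((↑) : J → Fin 3 → V)).card
        ≤ 3 ^ Fintype.card J := by
          simpa using (coverTransversals T ((↑) : J → Fin 3 → V)).card_le_univ
      _ ≤ 3 ^ (m - 1) := Nat.pow_le_pow_right (by decide) (by omega)
      _ ≤ 3 ^ (m - 1) + 1 := Nat.le_succ _
  · obtain ⟨v, hv, hV⟩ := hP.exists_forall_ne_of_card_eq hcard
    have : Nonempty J := Fintype.card_pos_iff.1 hm
    exact hP.card_coverTransversals_le hv hT.connected.preconnected hV
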